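/- arXiv:2201.12699 — 2 statements merged into one kernel-verified Lean document; each statement's English description precedes it below -/
import Mathlib

section
/- Let κ ∈ (0,1), let λ = √(1 − κ²), let f : ℝ → ℝ be defined by f(T) = ∫₀^T F(1/4, 3/4; 1/2; κ² sin² t) dt, let φ be the inverse of f, let ψ = arcsin(κ sin φ), and let d = cos ψ. Then d(0) = 1 and d satisfies the differential equation (d′)² = 2 (1 − d) (d² − λ²) on all of ℝ. -/
/-!
For the parameters `1/4, 3/4; 1/2` the hypergeometric series is an elementary function:
`(1/4)_n (3/4)_n / ((1/2)_n n!) = (1/2)_{2n} / (2n)!`, so `F(1/4, 3/4; 1/2; z²)` is the even part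
of the binomial series of `(1 - z)^(-1/2)` (`gaussHyp_sq`). Squaring this closed form gives
`F(1/4, 3/4; 1/2; z²)² = (1 + D) / (2 D²)` with `D = √(1 - z²)` (`gaussHyp_sq_sq`).

For `z = κ sin φ` one has `D = d`. The fundamental theorem of calculus gives
`φ' = 1 / F(1/4, 3/4; 1/2; z²)`, while `d' = -κ² sin φ cos φ φ' / d`. Hence
`(d')² = 2 κ⁴ sin² φ cos² φ / (1 + d)`, and substituting `κ² sin² φ = 1 - d²` and
`κ² cos² φ = d² - λ²` yields the differential equation.
-/

open Real

/-- The Gauss hypergeometric series `F(a, b; c; x)`. -/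
noncomputable def gaussHyp (a b c x : ℝ) : ℝ :=
  ∑' n : ℕ, ((ascPochhammer ℝ n).eval a * (ascPochhammer ℝ n).eval b /
    ((ascPochhammer ℝ n).eval c * (n.factorial : ℝ))) * x ^ n

/-- The duplication identity `(1/4)_n (3/4)_n / ((1/2)_n n!) = (1/2)_{2n} / (2n)!`. -/
lemma coeff_eq (n : ℕ) :
    (ascPochhammer ℝ n).eval (1/4) * (ascPochhammer ℝ n).eval (3/4) /
      ((ascPochhammer ℝ n).eval (1/2) * (n.factorial : ℝ)) =
    (ascPochhammer ℝ (2 * n)).eval (1/2) / ((2 * n).factorial : ℝ) := by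
  induction n with
  | zero => simp
  | succ n ih =>
    have hp : 0 < (ascPochhammer ℝ n).eval (1/2 : ℝ) := ascPochhammer_pos n _ (by norm_num)
    have h1 : (n.factorial : ℝ) ≠ 0 := by positivity
    have h2 : ((2 * n).factorial : ℝ) ≠ 0 := by positivity
    rw [div_eq_div_iff (by positivity) h2] at ih
    rw [show 2 * (n + 1) = 2 * n + 1 + 1 by ring]
    simp only [ascPochhammer_succ_eval, Nat.factorial_succ]
    push_cast
    rw [div_eq_div_iff (by positivity) (by positivity)]
    linear_combination ((1/4 + n) * (3/4 + n) * ((2 * n + 1 + 1) * (2 * n + 1)) : ℝ) * ih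

lemma choose_half_eq (n : ℕ) :
    Ring.choose ((1/2 : ℝ) + n - 1) n = (ascPochhammer ℝ n).eval (1/2) / (n.factorial : ℝ) := by
  rw [← Ring.multichoose_eq, eq_div_iff (by positivity), mul_comm, ← nsmul_eq_mul,
    Ring.factorial_nsmul_multichoose_eq_ascPochhammer, ← ascPochhammer_map (Nat.castRingHom ℝ),
    Polynomial.eval_map, ← Polynomial.eval₂_smulOneHom_eq_smeval]
  congr 1
  exact Subsingleton.elim _ _

/-- The binomial series of `(1 - z)^(-1/2)`. -/
lemma hasSum_inv_sqrt {z : ℝ} (hz : |z| < 1) :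
    HasSum (fun n : ℕ => (ascPochhammer ℝ n).eval (1/2) / (n.factorial : ℝ) * z ^ n)
      (1 / √(1 - z)) := by
  have h := (Real.one_div_one_sub_rpow_hasFPowerSeriesOnBall_zero (1/2)).hasSum (y := z)
    (by simpa [← ofReal_norm, Real.norm_eq_abs] using hz)
  simp only [zero_add, ← Real.sqrt_eq_rpow] at h
  refine h.congr_fun ?_
  intro n
  rw [FormalMultilinearSeries.ofScalars_apply_eq, smul_eq_mul, choose_half_eq]

/-- `F(1/4, 3/4; 1/2; z²)` is the even part of `(1 - z)^(-1/2)`. -/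
lemma gaussHyp_sq {z : ℝ} (hz : |z| < 1) :
    gaussHyp (1/4) (3/4) (1/2) (z ^ 2) = (1 / √(1 - z) + 1 / √(1 + z)) / 2 := by
  have h1 := hasSum_inv_sqrt hz
  have h2 := hasSum_inv_sqrt (z := -z) (by rwa [abs_neg])
  rw [sub_neg_eq_add] at h2
  have h := (h1.add h2).div_const 2
  have hinj : Function.Injective (fun n : ℕ => 2 * n) := fun a b hab => by
    simpa using hab
  rw [← hinj.hasSum_iff] at h
  · rw [gaussHyp, ← h.tsum_eq]
    refine tsum_congr fun n => ?_
    rw [coeff_eq]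
    simp only [Function.comp, pow_mul, neg_sq]
    ring
  · intro n hn
    -- The odd-degree terms at `z` and `-z` cancel.
    have hodd : Odd n := by
      rw [← Nat.not_even_iff_odd]
      rintro ⟨k, rfl⟩
      exact hn ⟨k, by simp [two_mul]⟩
    rw [hodd.neg_pow]
    ring

/-- With `p = √(1 - z)` and `q = √(1 + z)`, this is `((p + q) / (2 p q))²` rewritten by means of
`p² + q² = 2`, where `p q = √(1 - z²)`. -/
lemma gaussHyp_sq_sq {z : ℝ} (hz : |z| < 1) :
    gaussHyp (1/4) (3/4) (1/2) (z ^ 2) ^ 2 = (1 + √(1 - z ^ 2)) / (2 * √(1 - z ^ 2) ^ 2) := by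
  obtain ⟨ha, hb⟩ := abs_lt.mp hz
  rw [gaussHyp_sq hz, show 1 - z ^ 2 = (1 - z) * (1 + z) by ring, Real.sqrt_mul (by linarith)]
  have hp : 0 < √(1 - z) := Real.sqrt_pos.mpr (by linarith)
  have hq : 0 < √(1 + z) := Real.sqrt_pos.mpr (by linarith)
  have hp2 : √(1 - z) ^ 2 = 1 - z := Real.sq_sqrt (by linarith)
  have hq2 : √(1 + z) ^ 2 = 1 + z := Real.sq_sqrt (by linarith)
  have hs : √(1 - z) ^ 2 + √(1 + z) ^ 2 = 2 := by rw [hp2, hq2]; ring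
  field_simp
  linear_combination hs

theorem stmt_3 (κ : ℝ) (hκ : κ ∈ Set.Ioo (0 : ℝ) 1)
    (lam : ℝ) (hlam : lam = Real.sqrt (1 - κ^2))
    (f : ℝ → ℝ)
    (hf : ∀ T : ℝ, f T = ∫ t in (0:ℝ)..T, gaussHyp (1/4) (3/4) (1/2) (κ^2 * Real.sin t ^ 2))
    (φ : ℝ → ℝ) (hφf : Function.LeftInverse φ f) (hfφ : Function.RightInverse φ f)
    (ψ : ℝ → ℝ) (hψ : ∀ u : ℝ, ψ u = Real.arcsin (κ * Real.sin (φ u)))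
    (d : ℝ → ℝ) (hd : ∀ u : ℝ, d u = Real.cos (ψ u)) :
    d 0 = 1 ∧ ∀ u : ℝ, (deriv d u)^2 = 2 * (1 - d u) * ((d u)^2 - lam^2) := by
  obtain ⟨hκ0, hκ1⟩ := hκ
  have hz (t : ℝ) : |κ * sin t| < 1 := by
    rw [abs_mul, abs_of_pos hκ0]
    nlinarith [abs_sin_le_one t, abs_nonneg (sin t)]
  have hpos1 (t : ℝ) : 0 < √(1 - κ * sin t) :=
    Real.sqrt_pos.mpr (by linarith [(abs_lt.mp (hz t)).2])
  have hpos2 (t : ℝ) : 0 < √(1 + κ * sin t) :=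
    Real.sqrt_pos.mpr (by linarith [(abs_lt.mp (hz t)).1])
  set g : ℝ → ℝ := fun t => gaussHyp (1/4) (3/4) (1/2) (κ^2 * Real.sin t ^ 2) with hg
  have hgsq (t : ℝ) : g t = gaussHyp (1/4) (3/4) (1/2) ((κ * sin t) ^ 2) := by
    simp only [hg, mul_pow]
  have hgeq : g = fun t => (1 / √(1 - κ * sin t) + 1 / √(1 + κ * sin t)) / 2 :=
    funext fun t => by rw [hgsq, gaussHyp_sq (hz t)]
  have hgcont : Continuous g := by
    rw [hgeq]
    refine Continuous.div_const (Continuous.add ?_ ?_) 2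
    · exact continuous_const.div (by fun_prop) fun t => (hpos1 t).ne'
    · exact continuous_const.div (by fun_prop) fun t => (hpos2 t).ne'
  have hgpos (t : ℝ) : 0 < g t := by
    have := hpos1 t
    have := hpos2 t
    rw [hgeq]
    positivity
  have hfderiv (T : ℝ) : HasDerivAt f (g T) T := by
    rw [show f = fun T => ∫ t in (0:ℝ)..T, g t from funext hf]
    exact intervalIntegral.integral_hasDerivAt_right (hgcont.intervalIntegrable _ _)
      hgcont.aestronglyMeasurable.stronglyMeasurableAtFilter hgcont.continuousAt
  have hfmono : StrictMono f := strictMono_of_hasDerivAt_pos hfderiv hgpos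
  have hφcont : Continuous φ := by
    refine Monotone.continuous_of_surjective (fun a b hab => ?_) hφf.surjective
    rwa [← hfmono.le_iff_le, hfφ a, hfφ b]
  have hφderiv (u : ℝ) : HasDerivAt φ (g (φ u))⁻¹ u :=
    HasDerivAt.of_local_left_inverse hφcont.continuousAt (hfderiv _) (hgpos _).ne'
      (Filter.Eventually.of_forall hfφ)
  have hdeq : d = fun u => √(1 - (κ * sin (φ u)) ^ 2) :=
    funext fun u => by rw [hd, hψ, Real.cos_arcsin]
  have hφ0 : φ 0 = 0 := by
    have hf0 : f 0 = 0 := by rw [hf]; simp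
    simpa [hf0] using hφf 0
  refine ⟨by simp [hdeq, hφ0], fun u => ?_⟩
  have hrad : 0 < 1 - (κ * sin (φ u)) ^ 2 := by
    have := (sq_lt_one_iff_abs_lt_one _).mpr (hz (φ u))
    linarith
  have hdu : d u = √(1 - (κ * sin (φ u)) ^ 2) := congrFun hdeq u
  have hdpos : 0 < d u := hdu ▸ Real.sqrt_pos.mpr hrad
  have hdsq : d u ^ 2 = 1 - (κ * sin (φ u)) ^ 2 := by rw [hdu, Real.sq_sqrt hrad.le]
  have hlamsq : lam ^ 2 = 1 - κ ^ 2 := by rw [hlam, Real.sq_sqrt (by nlinarith)]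
  have hgu : g (φ u) ^ 2 = (1 + d u) / (2 * d u ^ 2) := by
    rw [hgsq, gaussHyp_sq_sq (hz _), hdu]
  have hderiv : deriv d u = -(κ ^ 2 * sin (φ u) * cos (φ u)) / (d u * g (φ u)) := by
    have h := ((((hφderiv u).sin.const_mul κ).pow 2).const_sub 1).sqrt hrad.ne'
    have h' := h.deriv
    simp only [Pi.pow_apply, ← hdu] at h'
    rw [← hdeq] at h'
    rw [h']
    have := hgpos (φ u)
    field_simp
    push_cast
    ring
  have hcs := sin_sq_add_cos_sq (φ u)
  have h1 : κ ^ 2 * sin (φ u) ^ 2 = 1 - d u ^ 2 := by rw [hdsq]; ring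
  have h2 : κ ^ 2 * cos (φ u) ^ 2 = d u ^ 2 - lam ^ 2 := by
    linear_combination κ ^ 2 * hcs - h1 + hlamsq
  rw [hderiv, div_pow, mul_pow, hgu, neg_sq,
    show (κ ^ 2 * sin (φ u) * cos (φ u)) ^ 2 =
      (κ ^ 2 * sin (φ u) ^ 2) * (κ ^ 2 * cos (φ u) ^ 2) by ring, h1, h2]
  field_simp
  ring
end

section
/- Define, for x ∈ (0,1), the signature-four base q₄(x) = exp(−π√2 · F(1/4, 3/4; 1; 1 − x) / F(1/4, 3/4; 1; x)) and the classical base q(x) = exp(−π · F(1/2, 1/2; 1; 1 − x) / F(1/2, 1/2; 1; x)), where F denotes the Gauss hypergeometric series. Then for every λ with 0 < λ < 1, q₄(λ²) = q(2λ/(1 + λ))². -/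
/-!
Both hypergeometric functions are period integrals, obtained by integrating the binomial series
of `(1 - x) ^ (-1/2)` term by term:

* `2π F(1/4, 3/4; 1; λ²) = ∫ (1 - λ cos φ) ^ (-1/2)` (`integral_signature_four`),
* `2π F(1/2, 1/2; 1; x) = ∫ (1 - x cos² φ) ^ (-1/2)` (`integral_legendre`),
* `2π F(1/2, 1/2; 1; k²) = ∫ |1 - k e^{iφ}|⁻¹` (`integral_parseval`),

all over `[0, 2π]`; the last one is Parseval's identity for `(1 - k e^{iφ}) ^ (-1/2)`.
Substituting `φ = 2θ` in the first integral gives a multiple of the second one, and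
`|1 - k e^{iφ}|² = 1 + k² - 2k cos φ` makes the third integral a multiple of the first one with
another `λ`. This yields the quadratic transformations

* `F(1/2, 1/2; 1; 2λ/(1+λ)) = √(1+λ) F(1/4, 3/4; 1; λ²)` (`gaussHyp_quadratic_sq`),
* `F(1/2, 1/2; 1; (1-λ)/(1+λ)) = √((1+λ)/2) F(1/4, 3/4; 1; 1-λ²)` (`gaussHyp_quadratic_compl`),

and the exponents of the two bases are read off from the quotient of the two.
-/

open Real

/-- The signature-four base `q₄`. -/
noncomputable def q4 (x : ℝ) : ℝ :=
  Real.exp (-π * Real.sqrt 2 * (gaussHyp (1/4) (3/4) 1 (1 - x) / gaussHyp (1/4) (3/4) 1 x))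

/-- The classical base `q`. -/
noncomputable def qClassical (x : ℝ) : ℝ :=
  Real.exp (-π * (gaussHyp (1/2) (1/2) 1 (1 - x) / gaussHyp (1/2) (1/2) 1 x))

open MeasureTheory intervalIntegral

/-! ### The binomial series of `(1 - x) ^ (-1/2)` -/

/-- The Taylor coefficients `(1/2)_n / n!` of `(1 - x) ^ (-1/2)`. -/
noncomputable def halfCoeff (n : ℕ) : ℝ :=
  (ascPochhammer ℝ n).eval (1 / 2) / (n.factorial : ℝ)

lemma halfCoeff_zero : halfCoeff 0 = 1 := by simp [halfCoeff]

lemma halfCoeff_succ (n : ℕ) :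
    halfCoeff (n + 1) = (2 * n + 1) / (2 * n + 2) * halfCoeff n := by
  have h : (n.factorial : ℝ) ≠ 0 := by positivity
  simp only [halfCoeff, ascPochhammer_succ_eval, Nat.factorial_succ, Nat.cast_mul, Nat.cast_add,
    Nat.cast_one]
  field_simp
  ring

lemma halfCoeff_nonneg (n : ℕ) : 0 ≤ halfCoeff n := by
  induction n with
  | zero => simp [halfCoeff_zero]
  | succ n ih => rw [halfCoeff_succ]; positivity

lemma halfCoeff_le_one (n : ℕ) : halfCoeff n ≤ 1 := by
  induction n with
  | zero => simp [halfCoeff_zero]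
  | succ n ih =>
    rw [halfCoeff_succ]
    have h : (2 * n + 1 : ℝ) / (2 * n + 2) ≤ 1 := by
      rw [div_le_one (by positivity)]; linarith
    exact mul_le_one₀ h (halfCoeff_nonneg n) ih

lemma choose_eq_halfCoeff (n : ℕ) : Ring.choose ((1 / 2 : ℝ) + n - 1) n = halfCoeff n := by
  rw [← Ring.multichoose_eq, halfCoeff, eq_div_iff (by positivity)]
  have h := Ring.factorial_nsmul_multichoose_eq_ascPochhammer (1 / 2 : ℝ) n
  rw [Polynomial.ascPochhammer_smeval_eq_eval] at h
  rw [← h, nsmul_eq_mul, mul_comm]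

lemma hasSum_halfCoeff {x : ℝ} (hx : |x| < 1) :
    HasSum (fun n ↦ halfCoeff n * x ^ n) (1 / √(1 - x)) := by
  have h := (Real.one_div_one_sub_rpow_hasFPowerSeriesOnBall_zero (1 / 2)).hasSum
    (y := x) (by simpa [← ofReal_norm, ENNReal.ofReal_lt_one] using hx)
  simp only [FormalMultilinearSeries.ofScalars_apply_eq, choose_eq_halfCoeff, zero_add,
    smul_eq_mul] at h
  rwa [Real.sqrt_eq_rpow]

lemma hasSum_halfCoeff_complex {z : ℂ} (hz : ‖z‖ < 1) :
    HasSum (fun n ↦ (halfCoeff n : ℂ) * z ^ n) (1 / (1 - z) ^ (1 / 2 : ℂ)) := by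
  have h := (Complex.one_div_one_sub_cpow_hasFPowerSeriesOnBall_zero (1 / 2)).hasSum
    (y := z) (by simpa [← ofReal_norm, ENNReal.ofReal_lt_one] using hz)
  have e (n : ℕ) : Ring.choose ((1 / 2 : ℂ) + n - 1) n = (halfCoeff n : ℂ) := by
    rw [← choose_eq_halfCoeff, Complex.ofReal_choose]
    push_cast
    rfl
  simpa only [FormalMultilinearSeries.ofScalars_apply_eq, e, zero_add, smul_eq_mul] using h

/-! ### Cosine moments and termwise integration -/

lemma integral_cos_pow_even (n : ℕ) :
    ∫ φ in (0 : ℝ)..2 * π, cos φ ^ (2 * n) = 2 * π * halfCoeff n := by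
  induction n with
  | zero => simp [halfCoeff_zero]
  | succ n ih =>
    rw [show 2 * (n + 1) = 2 * n + 2 by ring, integral_cos_pow, ih, halfCoeff_succ]
    simp
    ring

lemma integral_cos_pow_odd (n : ℕ) : ∫ φ in (0 : ℝ)..2 * π, cos φ ^ (2 * n + 1) = 0 := by
  induction n with
  | zero => simp
  | succ n ih =>
    rw [show 2 * (n + 1) + 1 = (2 * n + 1) + 2 by ring, integral_cos_pow, ih]
    simp

/-- Termwise integration of the binomial series, dominated by the geometric series in `r`. -/
lemma hasSum_integral_inv_sqrt {u : ℝ → ℝ} (hu : Continuous u) {r : ℝ} (hr : r < 1)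
    (hur : ∀ φ, |u φ| ≤ r) :
    HasSum (fun n ↦ halfCoeff n * ∫ φ in (0 : ℝ)..2 * π, u φ ^ n)
      (∫ φ in (0 : ℝ)..2 * π, 1 / √(1 - u φ)) := by
  have hr0 : 0 ≤ r := (abs_nonneg _).trans (hur 0)
  simp_rw [← intervalIntegral.integral_const_mul]
  refine hasSum_integral_of_dominated_convergence (fun n _ ↦ r ^ n) ?_ ?_ ?_ ?_ ?_
  · intro n
    exact Continuous.aestronglyMeasurable (by fun_prop)
  · intro n
    refine Filter.Eventually.of_forall fun φ _ ↦ ?_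
    rw [norm_mul, norm_pow, Real.norm_eq_abs, Real.norm_eq_abs, abs_of_nonneg (halfCoeff_nonneg n)]
    calc halfCoeff n * |u φ| ^ n ≤ 1 * r ^ n := by
          gcongr
          · exact halfCoeff_le_one n
          · exact hur φ
      _ = r ^ n := one_mul _
  · exact Filter.Eventually.of_forall fun _ _ ↦ summable_geometric_of_lt_one hr0 hr
  · exact intervalIntegrable_const
  · exact Filter.Eventually.of_forall fun φ _ ↦ hasSum_halfCoeff ((hur φ).trans_lt hr)

/-! ### Hypergeometric functions as period integrals -/

lemma gaussHyp_half (x : ℝ) :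
    gaussHyp (1 / 2) (1 / 2) 1 x = ∑' n, halfCoeff n ^ 2 * x ^ n := by
  unfold gaussHyp halfCoeff
  congr! 3 with n
  rw [ascPochhammer_eval_one]
  ring

/-- The coefficients of `F(1/4, 3/4; 1; x)`, from the duplication formulas
`(1/2)_{2n} = 4 ^ n (1/4)_n (3/4)_n` and `(2n)! = 4 ^ n n! (1/2)_n`. -/
lemma halfCoeff_two_mul (n : ℕ) :
    halfCoeff (2 * n) * halfCoeff n = (ascPochhammer ℝ n).eval (1 / 4) *
      (ascPochhammer ℝ n).eval (3 / 4) / ((ascPochhammer ℝ n).eval 1 * (n.factorial : ℝ)) := by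
  rw [ascPochhammer_eval_one]
  induction n with
  | zero => simp [halfCoeff_zero]
  | succ n ih =>
    rw [show 2 * (n + 1) = 2 * n + 1 + 1 by ring, halfCoeff_succ, halfCoeff_succ, halfCoeff_succ,
      show ∀ a b c d : ℝ, a * (b * c) * (d * halfCoeff n) = a * b * d * (c * halfCoeff n) by
        intros; ring, ih]
    have h : (n.factorial : ℝ) ≠ 0 := by positivity
    simp only [ascPochhammer_succ_eval, Nat.factorial_succ, Nat.cast_mul, Nat.cast_add,
      Nat.cast_one, Nat.cast_ofNat]
    field_simp
    ring

lemma gaussHyp_quarter (x : ℝ) :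
    gaussHyp (1 / 4) (3 / 4) 1 x = ∑' n, halfCoeff (2 * n) * halfCoeff n * x ^ n := by
  simp only [gaussHyp, halfCoeff_two_mul]

lemma integral_signature_four {l : ℝ} (hl : |l| < 1) :
    ∫ φ in (0 : ℝ)..2 * π, 1 / √(1 - l * cos φ) = 2 * π * gaussHyp (1 / 4) (3 / 4) 1 (l ^ 2) := by
  have h := hasSum_integral_inv_sqrt (u := fun φ ↦ l * cos φ) (by fun_prop) hl fun φ ↦ by
    rw [abs_mul]
    exact mul_le_of_le_one_right (abs_nonneg _) (abs_cos_le_one φ)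
  -- Only the even powers of `cos` contribute to the sum.
  have hinj : Function.Injective fun n : ℕ ↦ 2 * n := fun a b hab ↦ by
    simpa using hab
  rw [← hinj.hasSum_iff] at h
  · rw [gaussHyp_quarter, ← tsum_mul_left, ← h.tsum_eq]
    refine tsum_congr fun n ↦ ?_
    simp only [Function.comp, mul_pow, intervalIntegral.integral_const_mul, pow_mul]
    have := integral_cos_pow_even n
    simp only [pow_mul] at this
    rw [this]
    ring
  · intro m hm
    have hodd : Odd m := by
      rw [← Nat.not_even_iff_odd]
      rintro ⟨k, rfl⟩
      exact hm ⟨k, by simp only; ring⟩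
    obtain ⟨k, rfl⟩ := hodd
    simp only [mul_pow, intervalIntegral.integral_const_mul, integral_cos_pow_odd, mul_zero]

lemma integral_legendre {x : ℝ} (hx : |x| < 1) :
    ∫ φ in (0 : ℝ)..2 * π, 1 / √(1 - x * cos φ ^ 2) = 2 * π * gaussHyp (1 / 2) (1 / 2) 1 x := by
  have h := hasSum_integral_inv_sqrt (u := fun φ ↦ x * cos φ ^ 2) (by fun_prop) hx fun φ ↦ by
    rw [abs_mul, abs_of_nonneg (sq_nonneg (cos φ))]
    exact mul_le_of_le_one_right (abs_nonneg _) (cos_sq_le_one φ)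
  rw [gaussHyp_half, ← tsum_mul_left, ← h.tsum_eq]
  refine tsum_congr fun n ↦ ?_
  simp only [mul_pow, intervalIntegral.integral_const_mul, ← pow_mul, integral_cos_pow_even]
  ring

lemma integral_exp_int (m n : ℕ) :
    ∫ φ in (0 : ℝ)..2 * π, Complex.exp ((((m : ℂ) - n) * Complex.I) * φ) =
      if m = n then 2 * π else 0 := by
  split_ifs with hmn
  · simp [hmn]
  · have h : (m : ℂ) - n ≠ 0 := sub_ne_zero.2 (by exact_mod_cast hmn)
    rw [integral_exp_mul_complex (mul_ne_zero h Complex.I_ne_zero)]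
    have : Complex.exp (((m : ℂ) - n) * Complex.I * ((2 * π : ℝ) : ℂ)) = 1 := by
      rw [Complex.exp_eq_one_iff]
      exact ⟨(m : ℤ) - n, by push_cast; ring⟩
    rw [this]
    simp

lemma hasSum_mul_of_norm {f g : ℕ → ℂ} {S T : ℂ} (hf : HasSum f S) (hg : HasSum g T)
    (hfn : Summable fun n ↦ ‖f n‖) (hgn : Summable fun n ↦ ‖g n‖) :
    HasSum (fun p : ℕ × ℕ ↦ f p.1 * g p.2) (S * T) :=
  hf.mul hg (summable_mul_of_summable_norm hfn hgn)

lemma hasSum_mul_conj {f : ℕ → ℂ} {S : ℂ} (hf : HasSum f S) (hn : Summable fun n ↦ ‖f n‖) :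
    HasSum (fun p : ℕ × ℕ ↦ f p.1 * (starRingEnd ℂ) (f p.2)) (S * (starRingEnd ℂ) S) := by
  refine hasSum_mul_of_norm (g := fun n ↦ (starRingEnd ℂ) (f n)) hf
    (Complex.hasSum_conj'.2 hf) hn ?_
  simpa using hn

/-- `|1 - z|⁻¹` for `z = k e^{iφ}`, as the product of the binomial series of `(1 - z) ^ (-1/2)`
with its complex conjugate. -/
lemma hasSum_inv_norm {k : ℝ} (hk : 0 ≤ k) (hk1 : k < 1) (φ : ℝ) :
    HasSum (fun p : ℕ × ℕ ↦ ((halfCoeff p.1 * halfCoeff p.2 * k ^ (p.1 + p.2) : ℝ) : ℂ) *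
      Complex.exp ((((p.1 : ℂ) - p.2) * Complex.I) * φ))
      ((1 / √(1 + k ^ 2 - 2 * k * cos φ) : ℝ) : ℂ) := by
  obtain ⟨z, hz⟩ : ∃ z : ℂ, z = k * Complex.exp (φ * Complex.I) := ⟨_, rfl⟩
  have hzn : ‖z‖ = k := by
    rw [hz, norm_mul, Complex.norm_exp_ofReal_mul_I, Complex.norm_real, Real.norm_of_nonneg hk,
      mul_one]
  have hs := hasSum_halfCoeff_complex (z := z) (hzn.trans_lt hk1)
  obtain ⟨S, hS⟩ : ∃ S : ℂ, S = 1 / (1 - z) ^ (1 / 2 : ℂ) := ⟨_, rfl⟩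
  rw [← hS] at hs
  have hnorm : Summable fun n ↦ ‖(halfCoeff n : ℂ) * z ^ n‖ := by
    refine Summable.of_nonneg_of_le (fun _ ↦ norm_nonneg _) (fun n ↦ ?_)
      (summable_geometric_of_lt_one hk hk1)
    rw [norm_mul, norm_pow, hzn, Complex.norm_real, Real.norm_of_nonneg (halfCoeff_nonneg n)]
    exact mul_le_of_le_one_left (by positivity) (halfCoeff_le_one n)
  have hmul := hasSum_mul_conj hs hnorm
  have hval : S * (starRingEnd ℂ) S = ((1 / √(1 + k ^ 2 - 2 * k * cos φ) : ℝ) : ℂ) := by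
    have hsq : ‖1 - z‖ = √(1 + k ^ 2 - 2 * k * cos φ) := by
      rw [Complex.norm_def, Complex.normSq_apply]
      congr 1
      have h1 : (1 - z).re = 1 - k * cos φ := by simp [hz, Complex.exp_ofReal_mul_I_re]
      have h2 : (1 - z).im = -(k * sin φ) := by simp [hz, Complex.exp_ofReal_mul_I_im]
      rw [h1, h2]
      linear_combination k ^ 2 * sin_sq_add_cos_sq φ
    have hne : 1 - z ≠ 0 := fun h ↦ by
      have : ‖z‖ = 1 := by rw [← sub_eq_zero.1 h, norm_one]
      linarith
    have hT : (1 - z) ^ (1 / 2 : ℂ) * (1 - z) ^ (1 / 2 : ℂ) = 1 - z := by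
      rw [← Complex.cpow_add _ _ hne]
      norm_num
    have hT' : ‖(1 - z) ^ (1 / 2 : ℂ)‖ * ‖(1 - z) ^ (1 / 2 : ℂ)‖ = ‖1 - z‖ := by
      rw [← norm_mul, hT]
    rw [Complex.mul_conj, Complex.normSq_eq_norm_sq, hS, norm_div, norm_one, div_pow, one_pow,
      sq, hT', hsq]
  rw [hval] at hmul
  convert hmul using 1
  funext p
  have hc : (starRingEnd ℂ) z = k * Complex.exp (-(φ * Complex.I)) := by
    simp [hz, ← Complex.exp_conj]
  rw [map_mul, map_pow, hc, Complex.conj_ofReal, hz, mul_pow, mul_pow, ← Complex.exp_nat_mul,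
    ← Complex.exp_nat_mul, show (((p.1 : ℂ) - p.2) * Complex.I) * φ =
      p.1 * (φ * Complex.I) + p.2 * (-(φ * Complex.I)) by ring, Complex.exp_add]
  push_cast
  ring

/-- Only the diagonal terms of the double series `hasSum_inv_norm` survive the integration. -/
lemma integral_parseval {k : ℝ} (hk : 0 ≤ k) (hk1 : k < 1) :
    ∫ φ in (0 : ℝ)..2 * π, 1 / √(1 + k ^ 2 - 2 * k * cos φ) =
      2 * π * gaussHyp (1 / 2) (1 / 2) 1 (k ^ 2) := by
  have h : HasSum (fun p : ℕ × ℕ ↦ ∫ φ in (0 : ℝ)..2 * π,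
      ((halfCoeff p.1 * halfCoeff p.2 * k ^ (p.1 + p.2) : ℝ) : ℂ) *
        Complex.exp ((((p.1 : ℂ) - p.2) * Complex.I) * φ))
      (∫ φ in (0 : ℝ)..2 * π, ((1 / √(1 + k ^ 2 - 2 * k * cos φ) : ℝ) : ℂ)) := by
    refine hasSum_integral_of_dominated_convergence (fun p _ ↦ k ^ p.1 * k ^ p.2) ?_ ?_ ?_ ?_ ?_
    · intro p
      exact Continuous.aestronglyMeasurable (by fun_prop)
    · intro p
      refine Filter.Eventually.of_forall fun φ _ ↦ ?_
      have he : ‖Complex.exp ((((p.1 : ℂ) - p.2) * Complex.I) * φ)‖ = 1 := by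
        rw [show (((p.1 : ℂ) - p.2) * Complex.I) * φ = (((p.1 - p.2) * φ : ℝ) : ℂ) * Complex.I by
          push_cast; ring, Complex.norm_exp_ofReal_mul_I]
      have h1 := halfCoeff_nonneg p.1
      have h2 := halfCoeff_nonneg p.2
      rw [norm_mul, he, mul_one, Complex.norm_real, Real.norm_of_nonneg (by positivity), pow_add]
      exact mul_le_of_le_one_left (by positivity)
        (mul_le_one₀ (halfCoeff_le_one _) h2 (halfCoeff_le_one _))
    · exact Filter.Eventually.of_forall fun _ _ ↦
        (summable_geometric_of_lt_one hk hk1).mul_of_nonneg (summable_geometric_of_lt_one hk hk1)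
          (fun _ ↦ by positivity) (fun _ ↦ by positivity)
    · exact intervalIntegrable_const
    · exact Filter.Eventually.of_forall fun φ _ ↦ hasSum_inv_norm hk hk1 φ
  have hinj : Function.Injective fun n : ℕ ↦ (n, n) := fun a b hab ↦ congrArg Prod.fst hab
  simp only [intervalIntegral.integral_const_mul, integral_exp_int] at h
  rw [intervalIntegral.integral_ofReal, ← hinj.hasSum_iff] at h
  · rw [gaussHyp_half, ← tsum_mul_left]
    refine Eq.symm (HasSum.tsum_eq (Complex.hasSum_ofReal.1 ?_))
    convert h using 1
    funext n
    simp only [Function.comp, if_true]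
    push_cast
    ring
  · rintro ⟨m, n⟩ hmn
    have hne : m ≠ n := fun e ↦ hmn ⟨m, by simp [e]⟩
    simp [hne]

/-! ### Quadratic transformations -/

/-- The first quadratic transformation: the angle `2θ` turns `1 - λ cos 2θ` into
`(1 + λ) (1 - x cos² θ)` with `x = 2λ / (1 + λ)`. -/
lemma gaussHyp_quadratic_sq {l : ℝ} (hl : 0 < l) (hl1 : l < 1) :
    gaussHyp (1 / 2) (1 / 2) 1 (2 * l / (1 + l)) =
      √(1 + l) * gaussHyp (1 / 4) (3 / 4) 1 (l ^ 2) := by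
  have hx : |2 * l / (1 + l)| < 1 := by
    rw [abs_of_pos (by positivity), div_lt_one (by positivity)]
    linarith
  have hper : Function.Periodic (fun φ ↦ 1 / √(1 - l * cos φ)) (2 * π) := fun φ ↦ by
    simp only [cos_add_two_pi]
  have hdouble : ∫ θ in (0 : ℝ)..2 * π, 1 / √(1 - l * cos (2 * θ)) =
      ∫ φ in (0 : ℝ)..2 * π, 1 / √(1 - l * cos φ) := by
    have hint (a b : ℝ) : IntervalIntegrable (fun φ ↦ 1 / √(1 - l * cos φ)) volume a b := by
      refine Continuous.intervalIntegrable ?_ _ _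
      refine continuous_const.div (by fun_prop) fun φ ↦ ?_
      have : l * cos φ ≤ l := mul_le_of_le_one_right hl.le (cos_le_one φ)
      exact (Real.sqrt_pos.2 (by linarith)).ne'
    rw [intervalIntegral.integral_comp_mul_left (fun φ ↦ 1 / √(1 - l * cos φ)) two_ne_zero,
      mul_zero, ← integral_add_adjacent_intervals (hint 0 (2 * π)) (hint (2 * π) (2 * (2 * π)))]
    have := hper.intervalIntegral_add_eq (2 * π) 0
    rw [zero_add, ← two_mul] at this
    rw [this, smul_eq_mul]
    ring
  have hsub (θ : ℝ) : 1 / √(1 - 2 * l / (1 + l) * cos θ ^ 2) =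
      √(1 + l) * (1 / √(1 - l * cos (2 * θ))) := by
    have h1 : 1 - l * cos (2 * θ) = (1 + l) * (1 - 2 * l / (1 + l) * cos θ ^ 2) := by
      rw [cos_two_mul]
      field_simp
      ring
    have h2 : √(1 + l) ≠ 0 := (Real.sqrt_pos.2 (by positivity)).ne'
    rw [h1, Real.sqrt_mul (by positivity)]
    field_simp
  have hL := integral_legendre hx
  simp only [hsub] at hL
  rw [intervalIntegral.integral_const_mul, hdouble,
    integral_signature_four (by rwa [abs_of_pos hl])] at hL
  have hpi : (2 * π : ℝ) ≠ 0 := by positivity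
  apply mul_left_cancel₀ hpi
  linear_combination -hL

/-- The second quadratic transformation: with `k² = (1 - λ) / (1 + λ)` and `μ = (1 + λ) k`,
so that `μ² = 1 - λ²`, the quantity `1 + k² - 2k cos φ` equals `2 / (1 + λ) * (1 - μ cos φ)`. -/
lemma gaussHyp_quadratic_compl {l : ℝ} (hl : 0 < l) (hl1 : l < 1) :
    gaussHyp (1 / 2) (1 / 2) 1 ((1 - l) / (1 + l)) =
      √((1 + l) / 2) * gaussHyp (1 / 4) (3 / 4) 1 (1 - l ^ 2) := by
  have ht : 0 < (1 - l) / (1 + l) := div_pos (by linarith) (by linarith)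
  have ht1 : (1 - l) / (1 + l) < 1 := by
    rw [div_lt_one (by positivity)]
    linarith
  set k := √((1 - l) / (1 + l)) with hk
  have hk0 : 0 < k := Real.sqrt_pos.2 ht
  have hk2 : k ^ 2 = (1 - l) / (1 + l) := Real.sq_sqrt ht.le
  have hk1 : k < 1 := by nlinarith
  have hmu : ((1 + l) * k) ^ 2 = 1 - l ^ 2 := by
    rw [mul_pow, hk2]
    field_simp
    ring
  have hmu1 : |(1 + l) * k| < 1 := by
    rw [← sq_lt_one_iff_abs_lt_one, hmu]
    nlinarith
  have hsub (φ : ℝ) : 1 / √(1 + k ^ 2 - 2 * k * cos φ) =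
      √((1 + l) / 2) * (1 / √(1 - (1 + l) * k * cos φ)) := by
    have h1 : 1 - (1 + l) * k * cos φ = (1 + l) / 2 * (1 + k ^ 2 - 2 * k * cos φ) := by
      rw [hk2]
      field_simp
      ring
    have h2 : √((1 + l) / 2) ≠ 0 := (Real.sqrt_pos.2 (by positivity)).ne'
    rw [h1, Real.sqrt_mul (by positivity), one_div, one_div, mul_inv, mul_inv_cancel_left₀ h2]
  have hP := integral_parseval hk0.le hk1
  simp only [hsub] at hP
  rw [intervalIntegral.integral_const_mul, integral_signature_four hmu1, hmu, hk2] at hP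
  have hpi : (2 * π : ℝ) ≠ 0 := by positivity
  apply mul_left_cancel₀ hpi
  linear_combination -hP

theorem stmt_14 (lam : ℝ) (hlam : 0 < lam) (hlam1 : lam < 1) :
    q4 (lam^2) = (qClassical (2 * lam / (1 + lam)))^2 := by
  have hcompl : 1 - 2 * lam / (1 + lam) = (1 - lam) / (1 + lam) := by
    field_simp
    ring
  have hs : √(1 + lam) ≠ 0 := (Real.sqrt_pos.2 (by positivity)).ne'
  have h2 : √2 ≠ 0 := (Real.sqrt_pos.2 two_pos).ne'
  have h22 : √2 * √2 = 2 := Real.mul_self_sqrt two_pos.le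
  unfold q4 qClassical
  rw [hcompl, gaussHyp_quadratic_sq hlam hlam1, gaussHyp_quadratic_compl hlam hlam1,
    ← Real.exp_nat_mul, Real.sqrt_div (by positivity)]
  congr 1
  rw [mul_div_mul_comm, div_right_comm, div_self hs, one_div (√2), Nat.cast_ofNat]
  have hinv : (√2)⁻¹ * 2 = √2 := by
    rw [inv_mul_eq_iff_eq_mul₀ h2, h22]
  generalize gaussHyp (1 / 4) (3 / 4) 1 (1 - lam ^ 2) / gaussHyp (1 / 4) (3 / 4) 1 (lam ^ 2) = R
  linear_combination π * R * hinv
end
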